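/- For all natural numbers m,n with m,n ∉ {1,2}, the X₂^{(1)}-Hermite polynomials H⁽¹⁾_n := Wr(H₁,H₂,H_n) satisfy ∫_ℝ H⁽¹⁾_m(x)·H⁽¹⁾_n(x)·e^{−x²}/(4(1+2x²))² dx = √π·2^{n+2}·n!·(n−1)(n−2) if m = n, and the integral equals 0 if m ≠ n. -/

import Mathlib

/-- Physicists' Hermite polynomials via the Rodrigues formula. -/
noncomputable def Hr (n : ℕ) (x : ℝ) : ℝ :=
  (-1) ^ n * Real.exp (x ^ 2) * iteratedDeriv n (fun t => Real.exp (-t ^ 2)) x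

/-- Wronskian of three functions. -/
noncomputable def Wr (f g h : ℝ → ℝ) (x : ℝ) : ℝ :=
  Matrix.det !![f x, g x, h x;
                deriv f x, deriv g x, deriv h x;
                deriv (deriv f) x, deriv (deriv g) x, deriv (deriv h) x]

/-- The X₂⁽¹⁾-Hermite polynomials. -/
noncomputable def H1exc (n : ℕ) (x : ℝ) : ℝ := Wr (Hr 1) (Hr 2) (Hr n) x

/-!
For a polynomial `r`, write `δ r = r' - 2xr`, so that `(r e^{-x²})' = (δ r) e^{-x²}`. With
`η = Wr(H₁, H₂) / 4 = 1 + 2x²`, expanding the Wronskian gives `Wr(H₁, H₂, q) = 4 L q` where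
`L q = η q'' - η' q' + η'' q`. Integrating by parts twice against `e^{-x²} / η²` moves `L` to the
operator `L* = η δ² - η' δ + η''`, and `L* L = η² (T + 2) (T + 4)` for the Hermite operator
`T = δ ∘ d/dx`. The weight `1 / η²` therefore cancels, and since `T H_n = -2n H_n`, the claim
reduces to the classical orthogonality of the Hermite polynomials, multiplied by
`(2 - 2n) (4 - 2n) = 4 (n - 1) (n - 2)`.
-/

open Polynomial MeasureTheory

noncomputable section

section Algebra

variable (R : Type*) [CommRing R]

/-- The derivative conjugated by the Gaussian: `r ↦ e^{x²} (r e^{-x²})'` on polynomials. It is the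
negative of the raising operator of the Hermite polynomials. -/
def gaussianDerivative : Module.End R R[X] := derivative - LinearMap.mulLeft R (2 * X)

/-- The Hermite differential operator `q ↦ q'' - 2xq'`, whose eigenvectors are the Hermite
polynomials. -/
def hermiteOperator : Module.End R R[X] := gaussianDerivative R * derivative

/-- The physicists' Hermite polynomials as formal polynomials, built with the raising operator.
(Mathlib's `Polynomial.hermite` is the probabilists' family.) -/
def physHermite : ℕ → R[X]
  | 0 => 1
  | n + 1 => -gaussianDerivative R (physHermite n)

/-- The polynomial `η = 1 + 2x²`, that is `Wr(H₁, H₂) / 4`, which determines the exceptional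
weight. -/
def exceptionalEta : R[X] := 1 + 2 * X ^ 2

variable {R}

/-- The second-order operator `η D² - η' D + η''`. With `D = d/dx` and `η = exceptionalEta` it is
`q ↦ Wr(H₁, H₂, q) / 4`; with `D = gaussianDerivative` it is the formal adjoint of the former with
respect to `e^{-x²} / η²`. -/
def wronskianOperator (D : Module.End R R[X]) (η q : R[X]) : R[X] :=
  η * D (D q) - derivative η * D q + derivative (derivative η) * q

theorem gaussianDerivative_apply (r : R[X]) :
    gaussianDerivative R r = derivative r - 2 * X * r := rfl

theorem hermiteOperator_apply (q : R[X]) :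
    hermiteOperator R q = gaussianDerivative R (derivative q) := rfl

theorem gaussianDerivative_mul (p q : R[X]) :
    gaussianDerivative R (p * q) = derivative p * q + p * gaussianDerivative R q := by
  simp only [gaussianDerivative_apply, derivative_mul]
  ring

theorem derivative_gaussianDerivative (r : R[X]) :
    derivative (gaussianDerivative R r) = gaussianDerivative R (derivative r) - 2 * r := by
  simp only [gaussianDerivative_apply, derivative_sub, derivative_mul, derivative_ofNat,
    derivative_X]
  ring

theorem physHermite_zero : physHermite R 0 = 1 := rfl

theorem physHermite_succ (n : ℕ) :
    physHermite R (n + 1) = -gaussianDerivative R (physHermite R n) := rfl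

theorem physHermite_one : physHermite R 1 = 2 * X := by
  simp [physHermite, gaussianDerivative_apply]

theorem physHermite_two : physHermite R 2 = 4 * X ^ 2 - 2 := by
  rw [physHermite_succ, physHermite_one, gaussianDerivative_apply]
  simp only [derivative_mul, derivative_ofNat, derivative_X]
  ring

theorem derivative_physHermite_succ (n : ℕ) :
    derivative (physHermite R (n + 1)) = (2 * (n + 1) : R) • physHermite R n := by
  induction n with
  | zero => simp [physHermite_one, physHermite_zero, smul_eq_C_mul, map_ofNat]
  | succ k ih =>
    rw [physHermite_succ (k + 1), derivative_neg, derivative_gaussianDerivative, ih, map_smul,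
      ← neg_eq_iff_eq_neg.mpr (physHermite_succ k)]
    simp only [smul_eq_C_mul, map_mul, map_add, map_natCast, map_ofNat, map_one]
    push_cast
    ring

theorem hermiteOperator_physHermite (n : ℕ) :
    hermiteOperator R (physHermite R n) = (-2 * n : R) • physHermite R n := by
  cases n with
  | zero => simp [hermiteOperator_apply, physHermite_zero]
  | succ k =>
    rw [hermiteOperator_apply, derivative_physHermite_succ, map_smul, physHermite_succ, smul_neg,
      ← neg_smul]
    push_cast
    ring_nf

theorem hermiteOperator_add_two_mul_add_four_physHermite (n : ℕ) :
    ((hermiteOperator R + 2) * (hermiteOperator R + 4)) (physHermite R n)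
      = (4 * ((n - 1) * (n - 2)) : R) • physHermite R n := by
  have shifted_eigenvalue (c : ℕ) : (hermiteOperator R + (c : Module.End R R[X])) (physHermite R n)
      = (c - 2 * n : R) • physHermite R n := by
    rw [LinearMap.add_apply, hermiteOperator_physHermite, Module.End.natCast_apply,
      ← Nat.cast_smul_eq_nsmul R, ← add_smul]
    ring_nf
  have h2 := shifted_eigenvalue 2
  have h4 := shifted_eigenvalue 4
  push_cast at h2 h4
  rw [Module.End.mul_apply, h4, map_smul, h2, smul_smul]
  ring_nf

theorem derivative_exceptionalEta : derivative (exceptionalEta R) = 4 * X := by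
  simp only [exceptionalEta, pow_two, derivative_add, derivative_mul, derivative_one,
    derivative_ofNat, derivative_X]
  ring

/-- Lagrange's identity: with the bilinear concomitant `B = p' g - p δ g`, the right-hand side is
`η² e^{x²} (B e^{-x²} / η)'`. -/
theorem wronskianOperator_mul_sub (η p g : R[X]) :
    wronskianOperator derivative η p * g - p * wronskianOperator (gaussianDerivative R) η g
      = η * gaussianDerivative R (derivative p * g - p * gaussianDerivative R g)
        - derivative η * (derivative p * g - p * gaussianDerivative R g) := by
  simp only [wronskianOperator, map_sub, gaussianDerivative_mul]
  ring

theorem wronskianOperator_gaussianDerivative_comp_derivative (q : R[X]) :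
    wronskianOperator (gaussianDerivative R) (exceptionalEta R)
        (wronskianOperator derivative (exceptionalEta R) q)
      = exceptionalEta R ^ 2 * ((hermiteOperator R + 2) * (hermiteOperator R + 4)) q := by
  simp only [wronskianOperator, derivative_exceptionalEta, Module.End.mul_apply,
    LinearMap.add_apply, Module.End.ofNat_apply, nsmul_eq_mul, Nat.cast_ofNat,
    hermiteOperator_apply, gaussianDerivative_apply, derivative_add, derivative_sub,
    derivative_mul, derivative_ofNat, derivative_X, derivative_one, derivative_zero]
  rw [exceptionalEta]
  ring

end Algebra

theorem hasDerivAt_eval_mul_exp_neg_sq (r : ℝ[X]) (x : ℝ) :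
    HasDerivAt (fun t ↦ r.eval t * Real.exp (-t ^ 2))
      ((gaussianDerivative ℝ r).eval x * Real.exp (-x ^ 2)) x := by
  refine ((r.hasDerivAt x).mul (hasDerivAt_pow 2 x).fun_neg.exp).congr_deriv ?_
  simp only [gaussianDerivative_apply, eval_sub, eval_mul, eval_ofNat, eval_X]
  push_cast
  ring

theorem iteratedDeriv_exp_neg_sq (n : ℕ) :
    iteratedDeriv n (fun t : ℝ ↦ Real.exp (-t ^ 2))
      = fun x ↦ (-1) ^ n * ((physHermite ℝ n).eval x * Real.exp (-x ^ 2)) := by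
  induction n with
  | zero => simp [physHermite_zero]
  | succ k ih =>
    rw [iteratedDeriv_succ, ih]
    funext x
    rw [((hasDerivAt_eval_mul_exp_neg_sq _ x).const_mul _).deriv, physHermite_succ, eval_neg]
    ring

theorem Hr_eq_eval_physHermite (n : ℕ) : Hr n = fun x ↦ (physHermite ℝ n).eval x := by
  funext x
  have sign_sq : ((-1 : ℝ) ^ n) * (-1) ^ n = 1 := by rw [← mul_pow]; simp
  have exp_cancel : Real.exp (x ^ 2) * Real.exp (-x ^ 2) = 1 := by rw [← Real.exp_add]; simp
  calc Hr n x
      = ((-1) ^ n * (-1) ^ n) * (Real.exp (x ^ 2) * Real.exp (-x ^ 2))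
          * (physHermite ℝ n).eval x := by
        rw [Hr, iteratedDeriv_exp_neg_sq]
        ring
    _ = (physHermite ℝ n).eval x := by rw [sign_sq, exp_cancel, one_mul, one_mul]

theorem deriv_Hr_succ (n : ℕ) : deriv (Hr (n + 1)) = fun x ↦ 2 * (n + 1) * Hr n x := by
  funext x
  rw [Hr_eq_eval_physHermite, Hr_eq_eval_physHermite, Polynomial.deriv,
    derivative_physHermite_succ, eval_smul, smul_eq_mul]

theorem Wr_Hr_one_Hr_two (f : ℝ → ℝ) (x : ℝ) :
    Wr (Hr 1) (Hr 2) f x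
      = 4 * ((1 + 2 * x ^ 2) * deriv (deriv f) x - 4 * x * deriv f x + 4 * f x) := by
  have Hr_one : Hr 1 = fun x ↦ 2 * x := by simp [Hr_eq_eval_physHermite, physHermite_one]
  have Hr_two : Hr 2 = fun x ↦ 4 * x ^ 2 - 2 := by simp [Hr_eq_eval_physHermite, physHermite_two]
  have deriv_Hr_one : deriv (Hr 1) = fun _ ↦ 2 := by
    rw [Hr_one, deriv_const_mul_id']
  have deriv_Hr_two : deriv (Hr 2) = fun x ↦ 8 * x := by
    rw [deriv_Hr_succ 1, Hr_one]
    funext x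
    push_cast
    ring
  rw [Wr, deriv_Hr_one, deriv_Hr_two, Hr_one, Hr_two, Matrix.det_fin_three]
  simp only [deriv_const', deriv_const_mul_id', Matrix.of_apply, Matrix.cons_val]
  ring

theorem eval_exceptionalEta (x : ℝ) : (exceptionalEta ℝ).eval x = 1 + 2 * x ^ 2 := by
  simp [exceptionalEta]

theorem H1exc_eq_eval_wronskianOperator (n : ℕ) (x : ℝ) :
    H1exc n x
      = 4 * (wronskianOperator derivative (exceptionalEta ℝ) (physHermite ℝ n)).eval x := by
  have deriv_eval (q : ℝ[X]) : deriv (fun t ↦ q.eval t) = fun t ↦ q.derivative.eval t :=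
    funext fun _ ↦ q.deriv
  rw [H1exc, Wr_Hr_one_Hr_two, Hr_eq_eval_physHermite, deriv_eval, deriv_eval]
  simp only [wronskianOperator, derivative_exceptionalEta, derivative_mul, derivative_ofNat,
    derivative_X, eval_add, eval_sub, eval_mul, eval_exceptionalEta, eval_ofNat, eval_zero,
    eval_one, eval_X]
  ring

theorem integrable_eval_mul_exp_neg_mul_sq {b : ℝ} (hb : 0 < b) (q : ℝ[X]) :
    Integrable fun x : ℝ ↦ q.eval x * Real.exp (-b * x ^ 2) := by
  induction q using Polynomial.induction_on' with
  | add p q hp hq =>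
    simp only [eval_add, add_mul]
    exact hp.add hq
  | monomial n a =>
    have hn : (-1 : ℝ) < n := neg_one_lt_zero.trans_le n.cast_nonneg
    simpa [mul_assoc] using (integrable_rpow_mul_exp_neg_mul_sq hb hn).const_mul a

theorem integrable_eval_mul_exp_neg_sq (q : ℝ[X]) :
    Integrable fun x : ℝ ↦ q.eval x * Real.exp (-x ^ 2) := by
  simpa using integrable_eval_mul_exp_neg_mul_sq one_pos q

theorem integrable_div_of_one_le {α : Type*} [MeasurableSpace α] {μ : Measure α} {f g : α → ℝ}
    (hf : Integrable f μ) (hg : AEStronglyMeasurable g μ) (one_le : ∀ᵐ x ∂μ, 1 ≤ g x) :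
    Integrable (fun x ↦ f x / g x) μ := by
  refine hf.mono (hf.1.div₀ hg) ?_
  filter_upwards [one_le] with x hx
  rw [norm_div]
  exact div_le_self (norm_nonneg _) (hx.trans (le_abs_self _))

/-- The linear functional `p ↦ ∫ p(x) e^{-x²} dx` on polynomials; `gaussianFunctional (p * q)` is
the inner product for which the Hermite polynomials are orthogonal. -/
def gaussianFunctional : ℝ[X] →ₗ[ℝ] ℝ where
  toFun p := ∫ x : ℝ, p.eval x * Real.exp (-x ^ 2)
  map_add' p q := by
    simp only [eval_add, add_mul]
    exact integral_add (integrable_eval_mul_exp_neg_sq p) (integrable_eval_mul_exp_neg_sq q)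
  map_smul' c p := by
    simp only [eval_smul, smul_eq_mul, mul_assoc, integral_const_mul, RingHom.id_apply]

theorem gaussianFunctional_apply (p : ℝ[X]) :
    gaussianFunctional p = ∫ x : ℝ, p.eval x * Real.exp (-x ^ 2) := rfl

theorem gaussianFunctional_one : gaussianFunctional 1 = √Real.pi := by
  simpa [gaussianFunctional_apply] using integral_gaussian 1

theorem gaussianFunctional_gaussianDerivative (r : ℝ[X]) :
    gaussianFunctional (gaussianDerivative ℝ r) = 0 :=
  integral_eq_zero_of_hasDerivAt_of_integrable (hasDerivAt_eval_mul_exp_neg_sq r)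
    (integrable_eval_mul_exp_neg_sq _) (integrable_eval_mul_exp_neg_sq _)

theorem gaussianFunctional_physHermite_succ (n : ℕ) :
    gaussianFunctional (physHermite ℝ (n + 1)) = 0 := by
  rw [physHermite_succ, map_neg, gaussianFunctional_gaussianDerivative, neg_zero]

theorem gaussianFunctional_mul_physHermite_succ (q : ℝ[X]) (n : ℕ) :
    gaussianFunctional (q * physHermite ℝ (n + 1))
      = gaussianFunctional (derivative q * physHermite ℝ n) := by
  have h := gaussianFunctional_gaussianDerivative (q * physHermite ℝ n)
  rw [gaussianDerivative_mul, map_add] at h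
  rw [physHermite_succ, mul_neg, map_neg]
  exact (eq_neg_of_add_eq_zero_left h).symm

theorem gaussianFunctional_physHermite_mul_physHermite (m n : ℕ) :
    gaussianFunctional (physHermite ℝ m * physHermite ℝ n)
      = if m = n then √Real.pi * 2 ^ n * n.factorial else 0 := by
  induction m generalizing n with
  | zero =>
    cases n with
    | zero => simp [physHermite_zero, gaussianFunctional_one]
    | succ n => simp [physHermite_zero, gaussianFunctional_physHermite_succ]
  | succ m ih =>
    cases n with
    | zero => simp [physHermite_zero, gaussianFunctional_physHermite_succ]
    | succ n =>
      rw [gaussianFunctional_mul_physHermite_succ, derivative_physHermite_succ, smul_mul_assoc,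
        map_smul, ih, smul_eq_mul]
      rcases eq_or_ne m n with rfl | hmn
      · simp only [if_true, Nat.factorial_succ]
        push_cast
        ring
      · simp [hmn]

theorem integrable_eval_mul_exp_neg_sq_div_eval_pow {η : ℝ[X]} (one_le : ∀ x, 1 ≤ η.eval x)
    (q : ℝ[X]) (k : ℕ) :
    Integrable fun x : ℝ ↦ q.eval x * Real.exp (-x ^ 2) / η.eval x ^ k :=
  integrable_div_of_one_le (integrable_eval_mul_exp_neg_sq q)
    (η.continuous.pow k).aestronglyMeasurable (.of_forall fun x ↦ one_le_pow₀ (one_le x))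

theorem integral_gaussianDerivative_quotient_eq_zero {η : ℝ[X]} (one_le : ∀ x, 1 ≤ η.eval x)
    (r : ℝ[X]) :
    ∫ x : ℝ, (η * gaussianDerivative ℝ r - derivative η * r).eval x * Real.exp (-x ^ 2)
      / η.eval x ^ 2 = 0 := by
  refine integral_eq_zero_of_hasDerivAt_of_integrable
    (f := fun x ↦ r.eval x * Real.exp (-x ^ 2) / η.eval x) (fun x ↦ ?_)
    (integrable_eval_mul_exp_neg_sq_div_eval_pow one_le _ 2)
    (by simpa using integrable_eval_mul_exp_neg_sq_div_eval_pow one_le r 1)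
  have eta_ne_zero : η.eval x ≠ 0 := (one_pos.trans_le (one_le x)).ne'
  refine ((hasDerivAt_eval_mul_exp_neg_sq r x).div (η.hasDerivAt x) eta_ne_zero).congr_deriv ?_
  simp only [eval_sub, eval_mul]
  ring

theorem integral_wronskianOperator_mul {η : ℝ[X]} (one_le : ∀ x, 1 ≤ η.eval x) (p g : ℝ[X]) :
    ∫ x : ℝ, (wronskianOperator derivative η p * g).eval x * Real.exp (-x ^ 2) / η.eval x ^ 2
      = ∫ x : ℝ, (p * wronskianOperator (gaussianDerivative ℝ) η g).eval x * Real.exp (-x ^ 2)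
          / η.eval x ^ 2 := by
  rw [← sub_eq_zero, ← integral_sub (integrable_eval_mul_exp_neg_sq_div_eval_pow one_le _ 2)
    (integrable_eval_mul_exp_neg_sq_div_eval_pow one_le _ 2)]
  simp only [← sub_div, ← sub_mul, ← eval_sub, wronskianOperator_mul_sub]
  exact integral_gaussianDerivative_quotient_eq_zero one_le _

theorem one_le_eval_exceptionalEta (x : ℝ) : 1 ≤ (exceptionalEta ℝ).eval x := by
  rw [eval_exceptionalEta]
  exact le_add_of_nonneg_right (by positivity)

theorem integral_wronskianOperator_mul_wronskianOperator (p q : ℝ[X]) :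
    ∫ x : ℝ, (wronskianOperator derivative (exceptionalEta ℝ) p
        * wronskianOperator derivative (exceptionalEta ℝ) q).eval x * Real.exp (-x ^ 2)
        / (exceptionalEta ℝ).eval x ^ 2
      = gaussianFunctional (p * ((hermiteOperator ℝ + 2) * (hermiteOperator ℝ + 4)) q) := by
  rw [integral_wronskianOperator_mul one_le_eval_exceptionalEta,
    wronskianOperator_gaussianDerivative_comp_derivative, gaussianFunctional_apply]
  congr 1
  funext x
  have eta_ne_zero : (exceptionalEta ℝ).eval x ≠ 0 :=
    (one_pos.trans_le (one_le_eval_exceptionalEta x)).ne'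
  simp only [eval_mul, eval_pow]
  field_simp

theorem H1exc_mul_H1exc_mul_weight (m n : ℕ) (x : ℝ) :
    H1exc m x * H1exc n x * Real.exp (-x ^ 2) / (4 * (1 + 2 * x ^ 2)) ^ 2
      = (wronskianOperator derivative (exceptionalEta ℝ) (physHermite ℝ m)
          * wronskianOperator derivative (exceptionalEta ℝ) (physHermite ℝ n)).eval x
          * Real.exp (-x ^ 2) / (exceptionalEta ℝ).eval x ^ 2 := by
  rw [H1exc_eq_eval_wronskianOperator, H1exc_eq_eval_wronskianOperator, eval_exceptionalEta,
    eval_mul]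
  field_simp

end

theorem stmt3 (m n : ℕ) (hm : m ∉ ({1, 2} : Set ℕ)) (hn : n ∉ ({1, 2} : Set ℕ)) :
    ∫ x : ℝ, H1exc m x * H1exc n x * Real.exp (-x ^ 2) / (4 * (1 + 2 * x ^ 2)) ^ 2
      = if m = n then
          Real.sqrt Real.pi * 2 ^ (n + 2) * (Nat.factorial n) * (((n : ℝ) - 1) * ((n : ℝ) - 2))
        else 0 := by
  simp only [H1exc_mul_H1exc_mul_weight]
  rw [integral_wronskianOperator_mul_wronskianOperator,
    hermiteOperator_add_two_mul_add_four_physHermite, mul_smul_comm, map_smul,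
    gaussianFunctional_physHermite_mul_physHermite, smul_eq_mul, mul_ite, mul_zero]
  congr 1
  ring
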